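/- Let $A \subset \mathbb{R}$ and let $d \ge 5$ be an integer. Set $E = A^{d-4} \times (\Delta(A^2))^2 \subset \mathbb{R}^{d-3}$ and $F = A^{d-4} \times (-(\Delta(A^2))^2) \subset \mathbb{R}^{d-3}$, where $(\Delta(A^2))^2 = \{t^2 : t \in \Delta(A \times A)\}$ and $-(\Delta(A^2))^2 = \{-t^2 : t \in \Delta(A \times A)\}$. Then $\{P(x-y) : x \in E, y \in F\} = \{t^2 : t \in \Delta(A^d)\}$, where $P(x) = x_1^2 + \cdots + x_{d-4}^2 + x_{d-3}$ for $x \in \mathbb{R}^{d-3}$. -/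

import Mathlib

/-- The distance set `Δ(E) = {|x - y| : x, y ∈ E}` of a set `E ⊆ ℝⁿ`. -/
def distSet {n : ℕ} (E : Set (EuclideanSpace ℝ (Fin n))) : Set ℝ :=
  {t : ℝ | ∃ x ∈ E, ∃ y ∈ E, dist x y = t}

/-- The `n`-fold Cartesian product `Aⁿ ⊆ ℝⁿ` of a set `A ⊆ ℝ`. -/
def prodSet (A : Set ℝ) (n : ℕ) : Set (EuclideanSpace ℝ (Fin n)) :=
  {x | ∀ i, x i ∈ A}

/-- The parabolic polynomial `P(x) = x₁² + ⋯ + x_{n-1}² + x_n` on `ℝⁿ`. -/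
def parab (n : ℕ) (x : EuclideanSpace ℝ (Fin n)) : ℝ :=
  ∑ i : Fin n, if (i : ℕ) < n - 1 then x i ^ 2 else x i

theorem parab_sq_dist {n : ℕ} (x y : EuclideanSpace ℝ (Fin n)) :
    dist x y ^ 2 = ∑ i, (x i - y i) ^ 2 := by
  rw [EuclideanSpace.dist_eq, Real.sq_sqrt (Finset.sum_nonneg fun i _ => sq_nonneg _)]
  simp [Real.dist_eq, sq_abs]

theorem parab_succ (m : ℕ) (x : EuclideanSpace ℝ (Fin (m + 1))) :
    parab (m + 1) x = ∑ i : Fin m, x i.castSucc ^ 2 + x (Fin.last m) := by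
  unfold parab
  rw [Fin.sum_univ_castSucc]
  simp

/-- Extend a finite sequence by four further entries. -/
def parabExt {m : ℕ} (f : Fin m → ℝ) (a b c e : ℝ) : Fin (m + 4) → ℝ :=
  Fin.snoc (α := fun _ => ℝ) (Fin.snoc (α := fun _ => ℝ)
    (Fin.snoc (α := fun _ => ℝ) (Fin.snoc (α := fun _ => ℝ) f a) b) c) e

theorem parabExt_mem {m : ℕ} {A : Set ℝ} {f : Fin m → ℝ} {a b c e : ℝ} (hf : ∀ i, f i ∈ A)
    (ha : a ∈ A) (hb : b ∈ A) (hc : c ∈ A) (he : e ∈ A) (i : Fin (m + 4)) :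
    parabExt f a b c e i ∈ A := by
  unfold parabExt
  refine Fin.lastCases ?_ (fun i => ?_) i
  · simpa using he
  rw [Fin.snoc_castSucc]
  refine Fin.lastCases ?_ (fun i => ?_) i
  · simpa using hc
  rw [Fin.snoc_castSucc]
  refine Fin.lastCases ?_ (fun i => ?_) i
  · simpa using hb
  rw [Fin.snoc_castSucc]
  refine Fin.lastCases ?_ (fun i => ?_) i
  · simpa using ha
  rw [Fin.snoc_castSucc]
  exact hf i

theorem parabExt_sum {m : ℕ} (f g : Fin m → ℝ) (a b c e a2 b2 c2 e2 : ℝ) :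
    ∑ i, (parabExt f a b c e i - parabExt g a2 b2 c2 e2 i) ^ 2 =
      ∑ i, (f i - g i) ^ 2 + (a - a2) ^ 2 + (b - b2) ^ 2 + (c - c2) ^ 2 + (e - e2) ^ 2 := by
  unfold parabExt
  simp only [Fin.sum_univ_castSucc (n := m + 3), Fin.sum_univ_castSucc (n := m + 2),
    Fin.sum_univ_castSucc (n := m + 1), Fin.sum_univ_castSucc (n := m),
    Fin.snoc_castSucc, Fin.snoc_last]

theorem parab_aux (m : ℕ) (A : Set ℝ)
    (E F : Set (EuclideanSpace ℝ (Fin (m + 1))))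
    (hE : E = {x | (∀ i : Fin (m + 1), (i : ℕ) < m → x i ∈ A) ∧
      ∃ t ∈ distSet (prodSet A 2), x (Fin.last m) = t ^ 2})
    (hF : F = {x | (∀ i : Fin (m + 1), (i : ℕ) < m → x i ∈ A) ∧
      ∃ t ∈ distSet (prodSet A 2), x (Fin.last m) = -t ^ 2}) :
    {u : ℝ | ∃ x ∈ E, ∃ y ∈ F, parab (m + 1) (x - y) = u} =
      {u : ℝ | ∃ t ∈ distSet (prodSet A (m + 4)), u = t ^ 2} := by
  subst hE hF
  ext u
  constructor
  · rintro ⟨x, ⟨hx, _, ⟨p, hp, q, hq, rfl⟩, hxl⟩, y, ⟨hy, _, ⟨r, hr, s, hs, rfl⟩, hyl⟩, rfl⟩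
    refine ⟨_, ⟨WithLp.toLp 2 (parabExt (fun i : Fin m => x i.castSucc) (p 0) (p 1) (r 0) (r 1)),
      fun i => parabExt_mem (fun i => hx _ i.2) (hp 0) (hp 1) (hr 0) (hr 1) i,
      WithLp.toLp 2 (parabExt (fun i : Fin m => y i.castSucc) (q 0) (q 1) (s 0) (s 1)),
      fun i => parabExt_mem (fun i => hy _ i.2) (hq 0) (hq 1) (hs 0) (hs 1) i, rfl⟩, ?_⟩
    rw [parab_sq_dist, parab_succ, parabExt_sum]
    simp only [PiLp.sub_apply, hxl, hyl, parab_sq_dist, Fin.sum_univ_two]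
    ring
  · rintro ⟨_, ⟨v, hv, w, hw, rfl⟩, rfl⟩
    have mem2 : ∀ {a b : ℝ}, a ∈ A → b ∈ A →
        (!₂[a, b] : EuclideanSpace ℝ (Fin 2)) ∈ prodSet A 2 := by
      intro a b ha hb i
      fin_cases i
      · simpa using ha
      · simpa using hb
    let i0 : Fin (m + 4) := (Fin.last m).castSucc.castSucc.castSucc
    let i1 : Fin (m + 4) := (Fin.last (m + 1)).castSucc.castSucc
    let i2 : Fin (m + 4) := (Fin.last (m + 2)).castSucc
    let i3 : Fin (m + 4) := Fin.last (m + 3)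
    have memA : ∀ (z : EuclideanSpace ℝ (Fin (m + 4))) (c : ℝ), z ∈ prodSet A (m + 4) →
        ∀ i : Fin (m + 1), (i : ℕ) < m →
        (WithLp.toLp 2 (Fin.snoc (α := fun _ => ℝ)
          (fun i : Fin m => z i.castSucc.castSucc.castSucc.castSucc) c) :
          EuclideanSpace ℝ (Fin (m + 1))) i ∈ A := by
      intro z c hz i
      refine Fin.lastCases ?_ (fun i => ?_) i
      · simp
      · intro _
        simpa using hz _
    refine ⟨WithLp.toLp 2 (Fin.snoc (α := fun _ => ℝ)
        (fun i : Fin m => v i.castSucc.castSucc.castSucc.castSucc)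
        (dist !₂[v i0, v i1] !₂[w i0, w i1] ^ 2)),
      ⟨memA v _ hv, _, ⟨_, mem2 (hv i0) (hv i1), _, mem2 (hw i0) (hw i1), rfl⟩, by simp⟩,
      WithLp.toLp 2 (Fin.snoc (α := fun _ => ℝ)
        (fun i : Fin m => w i.castSucc.castSucc.castSucc.castSucc)
        (-dist !₂[v i2, v i3] !₂[w i2, w i3] ^ 2)),
      ⟨memA w _ hw, _, ⟨_, mem2 (hv i2) (hv i3), _, mem2 (hw i2) (hw i3), rfl⟩, by simp⟩, ?_⟩
    rw [parab_succ]
    simp only [PiLp.sub_apply, Fin.snoc_castSucc, Fin.snoc_last, parab_sq_dist, Fin.sum_univ_two,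
      Fin.sum_univ_castSucc (n := m + 3), Fin.sum_univ_castSucc (n := m + 2),
      Fin.sum_univ_castSucc (n := m + 1), Fin.sum_univ_castSucc (n := m)]
    simp [i0, i1, i2, i3]
    ring

theorem parab_image_eq_sq_distSet (d : ℕ) (hd : 5 ≤ d) (A : Set ℝ)
    (E F : Set (EuclideanSpace ℝ (Fin (d - 3))))
    (hE : E = {x | (∀ i : Fin (d - 3), (i : ℕ) < d - 4 → x i ∈ A) ∧
      ∃ t ∈ distSet (prodSet A 2), x ⟨d - 4, by omega⟩ = t ^ 2})
    (hF : F = {x | (∀ i : Fin (d - 3), (i : ℕ) < d - 4 → x i ∈ A) ∧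
      ∃ t ∈ distSet (prodSet A 2), x ⟨d - 4, by omega⟩ = -t ^ 2}) :
    {u : ℝ | ∃ x ∈ E, ∃ y ∈ F, parab (d - 3) (x - y) = u} =
      {u : ℝ | ∃ t ∈ distSet (prodSet A d), u = t ^ 2} := by
  obtain ⟨m, rfl⟩ : ∃ m, d = m + 4 := ⟨d - 4, by omega⟩
  exact parab_aux m A E F hE hF
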